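/- Let G be a strongly connected countable directed graph with finite Gurevich entropy h(G), let v be a vertex of G, and set L = limsup_n (lⁿ_{vv}(G))^{1/n}. The following are equivalent: (i) L > 0 and Σ_{n≥1} lⁿ_{vv}(G) L^{−n} = 1; (ii) G is recurrent and L = e^{h(G)}. -/

import Mathlib

open scoped ENNReal NNReal Classical
open Filter MeasureTheory

/-- A countable directed graph: countable sets of vertices and edges with
source and range maps. -/
structure DirGraph where
  V : Type
  E : Type
  countV : Countable V
  countE : Countable E
  s : E → V
  r : E → V

namespace DirGraph

attribute [instance] countV countE

variable (G : DirGraph)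

/-- `μ` is a finite path (a vertex counts as the empty path). -/
def IsPath (μ : List G.E) : Prop := μ.Chain' (fun e f => G.r e = G.s f)

/-- `μ` is a finite path from `u` to `w`. -/
def IsPathFrom (μ : List G.E) (u w : G.V) : Prop :=
  G.IsPath μ ∧ (∀ e ∈ μ.head?, G.s e = u) ∧ (∀ e ∈ μ.getLast?, G.r e = w) ∧ (μ = [] → u = w)

/-- A function `F : E → ℝ` extended to finite paths. -/
def Fsum (F : G.E → ℝ) (μ : List G.E) : ℝ := (μ.map F).sum

/-- The matrix `A(β)` over the vertices, with entries in `[0,∞]`: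
`A(β)_{uw} = Σ_{e : u → w} e^{-β F(e)}`. -/
noncomputable def Amat (F : G.E → ℝ) (β : ℝ) (u w : G.V) : ℝ≥0∞ :=
  ∑' e : {e : G.E // G.s e = u ∧ G.r e = w}, ENNReal.ofReal (Real.exp (-β * F e.1))

/-- The powers of the matrix `A(β)`, defined recursively; `A(β)⁰` is the identity matrix. -/
noncomputable def Apow (F : G.E → ℝ) (β : ℝ) : ℕ → G.V → G.V → ℝ≥0∞
  | 0, u, w => if u = w then 1 else 0
  | n + 1, u, w => ∑' x : G.V, G.Amat F β u x * Apow F β n x w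

/-- A sink is a vertex emitting no edges. -/
def IsSink (v : G.V) : Prop := ∀ e : G.E, G.s e ≠ v

/-- An infinite emitter is a vertex emitting infinitely many edges. -/
def InfEmitter (v : G.V) : Prop := {e : G.E | G.s e = v}.Infinite

/-- A set of vertices is hereditary when it is closed under following edges. -/
def Hereditary (H : Set G.V) : Prop := ∀ e : G.E, G.s e ∈ H → G.r e ∈ H

/-- A set of vertices `H` is saturated when every vertex of `V ∖ V∞` all of whose
successors lie in `H` belongs to `H`. -/
def Saturated (H : Set G.V) : Prop :=
  ∀ v : G.V, ¬ G.IsSink v → ¬ G.InfEmitter v → (∀ e : G.E, G.s e = v → G.r e ∈ H) → v ∈ H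

/-- `G` is cofinal when the only nonempty hereditary and saturated set of
vertices is the whole vertex set. -/
def Cofinal : Prop :=
  ∀ H : Set G.V, H.Nonempty → G.Hereditary H → G.Saturated H → H = Set.univ

/-- The set of non-wandering vertices: those lying on a loop of length ≥ 1. -/
def NW : Set G.V := {v | ∃ μ : List G.E, μ ≠ [] ∧ G.IsPathFrom μ v v}

/-- `G` is strongly connected when there is a finite path between any two vertices. -/
def StronglyConnected : Prop := ∀ u w : G.V, ∃ μ : List G.E, G.IsPathFrom μ u w

/-- `G` is row-finite when every vertex emits only finitely many edges. -/
def RowFinite : Prop := ∀ v : G.V, {e : G.E | G.s e = v}.Finite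

/-- `ψ` is an `A(β)`-harmonic vector. -/
def Harmonic (F : G.E → ℝ) (β : ℝ) (ψ : G.V → ℝ≥0) : Prop :=
  ∀ v : G.V, ∑' w : G.V, G.Amat F β v w * ψ w = (ψ v : ℝ≥0∞)

/-- `A(β)` is transient when `Σ_n A(β)ⁿ_{vv} < ∞` for every vertex. -/
def Transient (F : G.E → ℝ) (β : ℝ) : Prop :=
  ∀ v : G.V, ∑' n : ℕ, G.Apow F β n v v ≠ ⊤

/-- `A(β)` is recurrent when `Σ_n A(β)ⁿ_{vv} = ∞` for some vertex. -/
def Recurrent (F : G.E → ℝ) (β : ℝ) : Prop :=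
  ∃ v : G.V, ∑' n : ℕ, G.Apow F β n v v = ⊤

/-- An exit path: a sequence of vertices joined by edges which leaves every
finite set of vertices. -/
def IsExitPath (t : ℕ → G.V) : Prop :=
  (∀ i : ℕ, ∃ e : G.E, G.s e = t i ∧ G.r e = t (i + 1)) ∧
  ∀ M : Set G.V, M.Finite → ∃ N : ℕ, ∀ i : ℕ, N ≤ i → t i ∉ M

/-- Tail equivalence of vertex sequences. -/
def TailEquiv (t t' : ℕ → G.V) : Prop :=
  ∃ k : ℤ, ∃ N : ℕ, ∀ i : ℕ, N ≤ i → 0 ≤ (i : ℤ) + k ∧ t ((i : ℤ) + k).toNat = t' i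

/-- A simple loop based at `v`: a loop which returns to `v` only at the very end. -/
def IsSimpleLoop (v : G.V) (μ : List G.E) : Prop :=
  μ ≠ [] ∧ G.IsPathFrom μ v v ∧
  ∀ (i : ℕ) (h : i + 1 < μ.length), G.r (μ.get ⟨i, Nat.lt_of_succ_lt h⟩) ≠ v

/-- `lⁿ_{vv}(β)`: the weighted number of simple loops of length `n` based at `v`. -/
noncomputable def loopSum (F : G.E → ℝ) (β : ℝ) (v : G.V) (n : ℕ) : ℝ≥0∞ :=
  ∑' μ : {μ : List G.E // μ.length = n ∧ G.IsSimpleLoop v μ},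
    ENNReal.ofReal (Real.exp (-β * G.Fsum F μ.1))

/-- The space `P(G)` of infinite paths in `G`. -/
def PathSpace : Type := {p : ℕ → G.E // ∀ i : ℕ, G.r (p i) = G.s (p (i + 1))}

/-- The Borel σ-algebra of `P(G)` as a subspace of the product `E^ℕ` with `E`
discrete (for a countable discrete space, the Borel σ-algebra is the power set). -/
instance : MeasurableSpace G.PathSpace :=
  letI : MeasurableSpace G.E := ⊤
  inferInstanceAs (MeasurableSpace {p : ℕ → G.E // ∀ i : ℕ, G.r (p i) = G.s (p (i + 1))})

/-- The cylinder set `Z'(v)` of infinite paths starting at the vertex `v`. -/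
def cylV (v : G.V) : Set G.PathSpace := {p | G.s (p.1 0) = v}

/-- The cylinder set `Z'(μ)` of infinite paths beginning with the finite path `μ`. -/
def cylP (μ : List G.E) : Set G.PathSpace :=
  {p | ∀ (i : ℕ) (h : i < μ.length), p.1 i = μ.get ⟨i, h⟩}

/-- The set `P(G)_wan` of wandering infinite paths: those visiting each vertex
only finitely many times. -/
def wanSet : Set G.PathSpace := {p | ∀ v : G.V, {i : ℕ | G.s (p.1 i) = v}.Finite}

end DirGraph

/-!
Cutting a loop at `v` at its first return to `v` gives the renewal equation
`Aⁿ⁺¹_{vv} = ∑_{i + j = n} lⁱ⁺¹_{vv} Aʲ_{vv}`. Hence the generating functions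
`P(t) = ∑ Aⁿ_{vv} tⁿ` and `F(t) = ∑ lⁿ_{vv} tⁿ` satisfy `P(t) = (1 - F(t))⁻¹` in `[0, ∞]` for every
`t`, so `P(t) = ∞` exactly when `F(t) ≥ 1`. If `F(1/L) = 1`, then `F(t) < 1` and `P(t) < ∞` for
`t < 1/L`, so `e^h ≤ L`, while `L ≤ e^h` always holds. Conversely, `P(t) < ∞` and hence `F(t) < 1`
for `t < e^{-h}`, so `F(e^{-h}) ≤ 1` by lower semicontinuity, and recurrence gives `F(e^{-h}) ≥ 1`.
-/

open Finset.HasAntidiagonal (antidiagonal mem_antidiagonal)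

section GrowthRate

/-- The exponential growth rate `limsup aₙ^{1/n}` of a sequence, that is, the inverse of the radius
of convergence of `∑ aₙ tⁿ`. The term `n = 0` is irrelevant. -/
noncomputable def growthRate (a : ℕ → ℝ≥0∞) : ℝ≥0∞ :=
  limsup (fun n : ℕ => a n ^ ((n : ℝ)⁻¹)) atTop

variable {a b : ℕ → ℝ≥0∞} {s t : ℝ≥0∞}

lemma growthRate_mono (h : ∀ᶠ n in atTop, a n ≤ b n) : growthRate a ≤ growthRate b :=
  limsup_le_limsup <| h.mono fun _ hn => ENNReal.rpow_le_rpow hn (by positivity)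

lemma growthRate_le_inv_of_tsum_ne_top (h : ∑' n, a n * t ^ n ≠ ⊤) : growthRate a ≤ t⁻¹ := by
  have hle_one : ∀ᶠ n in atTop, a n * t ^ n ≤ 1 :=
    (ENNReal.tendsto_atTop_zero_of_tsum_ne_top h).eventually_le_const zero_lt_one
  refine limsup_le_of_le (by isBoundedDefault) ?_
  filter_upwards [hle_one, eventually_ne_atTop 0] with n hn hn0
  calc a n ^ ((n : ℝ)⁻¹) ≤ (t⁻¹ ^ n) ^ ((n : ℝ)⁻¹) := by
        refine ENNReal.rpow_le_rpow ?_ (by positivity)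
        rwa [← ENNReal.inv_pow, ENNReal.le_inv_iff_mul_le]
    _ = t⁻¹ := ENNReal.pow_rpow_inv_natCast hn0 _

lemma eventually_le_pow_of_growthRate_lt {c : ℝ≥0∞} (h : growthRate a < c) :
    ∀ᶠ n in atTop, a n ≤ c ^ n := by
  filter_upwards [eventually_lt_of_limsup_lt h, eventually_ne_atTop 0] with n hn hn0
  calc a n = (a n ^ ((n : ℝ)⁻¹)) ^ n := (ENNReal.rpow_inv_natCast_pow hn0 _).symm
    _ ≤ c ^ n := by gcongr

lemma tsum_ne_top_of_growthRate_lt_inv (ha : ∀ n, a n ≠ ⊤) (h : growthRate a < t⁻¹) :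
    ∑' n, a n * t ^ n ≠ ⊤ := by
  obtain ⟨c, hac, hct⟩ := exists_between h
  obtain ⟨N, hN⟩ := eventually_atTop.1 (eventually_le_pow_of_growthRate_lt hac)
  have ht : t ≠ ⊤ := by
    rintro rfl
    simp at hct
  have hct_one : c * t < 1 := ENNReal.mul_lt_of_lt_div (by rwa [one_div])
  have htail : ∑' n, a (n + N) * t ^ (n + N) ≤ ∑' n, (c * t) ^ n :=
    calc ∑' n, a (n + N) * t ^ (n + N) ≤ ∑' n, (c * t) ^ (n + N) := by
          refine ENNReal.tsum_le_tsum fun n => ?_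
          rw [mul_pow]
          gcongr
          exact hN _ (Nat.le_add_left N n)
      _ ≤ ∑' n, (c * t) ^ n :=
          ENNReal.tsum_comp_le_tsum_of_injective (add_left_injective N) fun n => (c * t) ^ n
  rw [← ENNReal.summable.sum_add_tsum_nat_add' (k := N)]
  refine ENNReal.add_ne_top.2
    ⟨ENNReal.sum_ne_top.2 fun n _ => ENNReal.mul_ne_top (ha n) (ENNReal.pow_ne_top ht), ?_⟩
  refine ne_top_of_le_ne_top ?_ htail
  rw [ENNReal.tsum_geometric]
  exact ENNReal.inv_ne_top.2 (tsub_pos_of_lt hct_one).ne'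

lemma ne_top_of_growthRate_ne_top (ha0 : a 0 ≠ ⊤) (hmul : ∀ m n, a m * a n ≤ a (m + n))
    (h : growthRate a ≠ ⊤) (n : ℕ) : a n ≠ ⊤ := by
  intro htop
  have hn : 0 < n := Nat.pos_of_ne_zero fun hn0 => ha0 (hn0 ▸ htop)
  have hmultiples : ∀ k, a ((k + 1) * n) = ⊤ := by
    intro k
    induction k with
    | zero => simpa using htop
    | succ k ih =>
      have hle := hmul ((k + 1) * n) n
      rwa [ih, htop, ENNReal.top_mul_top, top_le_iff, ← Nat.succ_mul] at hle
  refine h (top_le_iff.1 (le_limsup_of_frequently_le (frequently_atTop.2 fun N => ?_)))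
  refine ⟨(N + 1) * n, N.le_succ.trans (Nat.le_mul_of_pos_right _ hn), ?_⟩
  rw [hmultiples, ENNReal.top_rpow_of_pos (by positivity)]

lemma tsum_mul_mul_pow_succ_le (h : s ≤ 1) :
    ∑' n, a n * (s * t) ^ (n + 1) ≤ s * ∑' n, a n * t ^ (n + 1) := by
  rw [← ENNReal.tsum_mul_left]
  refine ENNReal.tsum_le_tsum fun n => ?_
  calc a n * (s * t) ^ (n + 1) = s ^ (n + 1) * (a n * t ^ (n + 1)) := by ring
    _ ≤ s * (a n * t ^ (n + 1)) := by
        gcongr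
        exact pow_le_of_le_one zero_le h n.succ_ne_zero

lemma tsum_mul_pow_succ_le_of_forall_lt {c : ℝ≥0∞} (hs : s ≠ 0)
    (h : ∀ t < s, ∑' n, a n * t ^ (n + 1) ≤ c) : ∑' n, a n * s ^ (n + 1) ≤ c := by
  have : (nhdsWithin s (Set.Iio s)).NeBot := nhdsLT_neBot_of_exists_lt ⟨0, pos_iff_ne_zero.2 hs⟩
  rw [ENNReal.tsum_eq_iSup_nat]
  refine iSup_le fun N => ?_
  have hpartial : Tendsto (fun t => ∑ n ∈ Finset.range N, a n * t ^ (n + 1))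
      (nhdsWithin s (Set.Iio s)) (nhds (∑ n ∈ Finset.range N, a n * s ^ (n + 1))) :=
    tendsto_finsetSum _ fun n _ =>
      ENNReal.Tendsto.const_mul (((ENNReal.continuous_pow (n + 1)).tendsto _).mono_left
        nhdsWithin_le_nhds) (Or.inl (pow_ne_zero _ hs))
  refine le_of_tendsto hpartial ?_
  filter_upwards [self_mem_nhdsWithin] with t ht
  exact (ENNReal.sum_le_tsum _).trans (h t ht)

lemma tsum_sum_antidiagonal_mul (a b : ℕ → ℝ≥0∞) :
    ∑' n, ∑ ij ∈ antidiagonal n, a ij.1 * b ij.2 = (∑' n, a n) * ∑' n, b n := by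
  simp_rw [← ENNReal.tsum_mul_right, ← ENNReal.tsum_mul_left]
  rw [← ENNReal.tsum_prod, ← Finset.HasAntidiagonal.sigmaAntidiagonalEquivProd.tsum_eq,
    ENNReal.tsum_sigma']
  refine tsum_congr fun n => ?_
  rw [tsum_fintype]
  exact (Finset.sum_coe_sort _ fun ij : ℕ × ℕ => a ij.1 * b ij.2).symm

lemma tsum_mul_sum_mul {α ι : Type*} (c : α → ℝ≥0∞) (g : ι → α → ℝ≥0∞) (d : ι → ℝ≥0∞)
    (I : Finset ι) :
    ∑' x, c x * ∑ i ∈ I, g i x * d i = ∑ i ∈ I, (∑' x, c x * g i x) * d i := by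
  simp_rw [Finset.mul_sum, ← ENNReal.tsum_mul_right, mul_assoc]
  exact Summable.tsum_finsetSum fun _ _ => ENNReal.summable

end GrowthRate

/-- `p` is the renewal sequence of the first-return sequence `f`. Only the values `f n` with
`1 ≤ n` matter. -/
structure IsRenewalPair (f p : ℕ → ℝ≥0∞) : Prop where
  zero : p 0 = 1
  succ : ∀ n, p (n + 1) = ∑ ij ∈ antidiagonal n, f (ij.1 + 1) * p ij.2

namespace IsRenewalPair

variable {f p : ℕ → ℝ≥0∞}

protected lemma mul_pow (h : IsRenewalPair f p) (t : ℝ≥0∞) :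
    IsRenewalPair (fun n => f n * t ^ n) (fun n => p n * t ^ n) where
  zero := by simp [h.zero]
  succ n := by
    rw [h.succ, Finset.sum_mul]
    refine Finset.sum_congr rfl fun ij hij => ?_
    rw [← mem_antidiagonal.1 hij]
    ring

lemma le_succ (h : IsRenewalPair f p) (n : ℕ) : f (n + 1) ≤ p (n + 1) := by
  have hmem : (n, 0) ∈ antidiagonal n := mem_antidiagonal.2 (add_zero n)
  rw [h.succ]
  simpa only [h.zero, mul_one] using
    Finset.single_le_sum (f := fun ij : ℕ × ℕ => f (ij.1 + 1) * p ij.2) (fun _ _ => zero_le) hmem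

lemma growthRate_le (h : IsRenewalPair f p) : growthRate f ≤ growthRate p := by
  refine growthRate_mono ?_
  filter_upwards [eventually_ne_atTop 0] with n hn
  obtain ⟨m, rfl⟩ := Nat.exists_eq_succ_of_ne_zero hn
  exact h.le_succ m

lemma tsum_eq_one_add (h : IsRenewalPair f p) :
    ∑' n, p n = 1 + (∑' n, f (n + 1)) * ∑' n, p n := by
  rw [← tsum_sum_antidiagonal_mul (fun n => f (n + 1)), tsum_eq_zero_add' ENNReal.summable, h.zero]
  simp_rw [h.succ]

lemma sum_range_succ_le (h : IsRenewalPair f p) (N : ℕ) :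
    ∑ n ∈ Finset.range (N + 1), p n ≤ 1 + (∑' n, f (n + 1)) * ∑ n ∈ Finset.range N, p n := by
  rw [Finset.sum_range_succ', h.zero, add_comm, sum_eq_tsum_indicator p,
    ← tsum_sum_antidiagonal_mul (fun n => f (n + 1))]
  gcongr
  refine le_trans (Finset.sum_le_sum fun n hn => ?_) (ENNReal.sum_le_tsum (Finset.range N))
  rw [h.succ]
  refine Finset.sum_le_sum fun ij hij => ?_
  have hj : ij.2 < N :=
    (le_add_self.trans_eq (mem_antidiagonal.1 hij)).trans_lt (Finset.mem_range.1 hn)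
  simp [hj]

lemma tsum_ne_top (h : IsRenewalPair f p) (hf : ∑' n, f (n + 1) < 1) : ∑' n, p n ≠ ⊤ := by
  set F := ∑' n, f (n + 1)
  have hF : 1 - F ≠ 0 := (tsub_pos_of_lt hf).ne'
  have hfix : 1 + F * (1 - F)⁻¹ = (1 - F)⁻¹ := by
    calc 1 + F * (1 - F)⁻¹ = (1 - F) * (1 - F)⁻¹ + F * (1 - F)⁻¹ := by
          rw [ENNReal.mul_inv_cancel hF (ENNReal.sub_ne_top ENNReal.one_ne_top)]
      _ = (1 - F)⁻¹ := by rw [← add_mul, tsub_add_cancel_of_le hf.le, one_mul]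
  have hpartial : ∀ N, ∑ n ∈ Finset.range N, p n ≤ (1 - F)⁻¹ := by
    intro N
    induction N with
    | zero => simp
    | succ N ih =>
      calc ∑ n ∈ Finset.range (N + 1), p n ≤ 1 + F * ∑ n ∈ Finset.range N, p n :=
            h.sum_range_succ_le N
        _ ≤ 1 + F * (1 - F)⁻¹ := by gcongr
        _ = (1 - F)⁻¹ := hfix
  refine ne_top_of_le_ne_top (ENNReal.inv_ne_top.2 hF) ?_
  rw [ENNReal.tsum_eq_iSup_nat]
  exact iSup_le hpartial

lemma tsum_eq_top_iff (h : IsRenewalPair f p) : ∑' n, p n = ⊤ ↔ 1 ≤ ∑' n, f (n + 1) := by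
  refine ⟨fun htop => not_lt.1 fun hlt => h.tsum_ne_top hlt htop, fun hone => ?_⟩
  by_contra hfin
  refine (ENNReal.lt_add_right hfin one_ne_zero).not_ge ?_
  calc ∑' n, p n + 1 ≤ 1 + (∑' n, f (n + 1)) * ∑' n, p n := by
        rw [add_comm]
        gcongr
        exact le_mul_of_one_le_left' hone
    _ = ∑' n, p n := h.tsum_eq_one_add.symm

lemma tsum_mul_pow_eq_top_iff (h : IsRenewalPair f p) (t : ℝ≥0∞) :
    ∑' n, p n * t ^ n = ⊤ ↔ 1 ≤ ∑' n, f (n + 1) * t ^ (n + 1) :=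
  (h.mul_pow t).tsum_eq_top_iff

lemma growthRate_le_of_tsum_eq_one (h : IsRenewalPair f p) {L : ℝ≥0∞} (hL0 : L ≠ 0) (hL : L ≠ ⊤)
    (hf : ∑' n, f (n + 1) * L⁻¹ ^ (n + 1) = 1) : growthRate p ≤ L := by
  refine le_of_forall_gt_imp_ge_of_dense fun r hr => ?_
  have hratio : L * r⁻¹ < 1 := by
    rw [← div_eq_mul_inv]
    exact ENNReal.div_lt_of_lt_mul (by rwa [one_mul])
  have hr_inv : r⁻¹ = L * r⁻¹ * L⁻¹ := by
    rw [mul_right_comm, ENNReal.mul_inv_cancel hL0 hL, one_mul]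
  have hlt : ∑' n, f (n + 1) * r⁻¹ ^ (n + 1) < 1 :=
    calc ∑' n, f (n + 1) * r⁻¹ ^ (n + 1)
        ≤ L * r⁻¹ * ∑' n, f (n + 1) * L⁻¹ ^ (n + 1) := by
          conv_lhs => rw [hr_inv]
          exact tsum_mul_mul_pow_succ_le hratio.le
      _ < 1 := by rwa [hf, mul_one]
  have hfin : ∑' n, p n * r⁻¹ ^ n ≠ ⊤ :=
    mt (h.tsum_mul_pow_eq_top_iff r⁻¹).1 hlt.not_ge
  simpa using growthRate_le_inv_of_tsum_ne_top hfin

lemma tsum_mul_inv_growthRate_pow_le_one (h : IsRenewalPair f p) (hp : ∀ n, p n ≠ ⊤)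
    (hR : growthRate p ≠ ⊤) : ∑' n, f (n + 1) * (growthRate p)⁻¹ ^ (n + 1) ≤ 1 := by
  refine tsum_mul_pow_succ_le_of_forall_lt (ENNReal.inv_ne_zero.2 hR) fun t ht => ?_
  have hfin := tsum_ne_top_of_growthRate_lt_inv hp (ENNReal.lt_inv_iff_lt_inv.1 ht)
  exact (not_le.1 (mt (h.tsum_mul_pow_eq_top_iff t).2 hfin)).le

theorem tsum_mul_inv_growthRate_pow_eq_one_iff (h : IsRenewalPair f p) (hp : ∀ n, p n ≠ ⊤)
    (hR0 : growthRate p ≠ 0) (hR : growthRate p ≠ ⊤) :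
    (0 < growthRate f ∧ ∑' n, f (n + 1) * (growthRate f)⁻¹ ^ (n + 1) = 1) ↔
      (∑' n, p n * (growthRate p)⁻¹ ^ n = ⊤ ∧ growthRate f = growthRate p) := by
  constructor
  · rintro ⟨hL0, hf⟩
    have hL : growthRate f ≠ ⊤ := ne_top_of_le_ne_top hR h.growthRate_le
    have heq : growthRate f = growthRate p :=
      h.growthRate_le.antisymm (h.growthRate_le_of_tsum_eq_one hL0.ne' hL hf)
    exact ⟨(h.tsum_mul_pow_eq_top_iff _).2 (heq ▸ hf.ge), heq⟩
  · rintro ⟨htop, heq⟩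
    rw [heq]
    exact ⟨pos_iff_ne_zero.2 hR0, (h.tsum_mul_inv_growthRate_pow_le_one hp hR).antisymm
      ((h.tsum_mul_pow_eq_top_iff _).1 htop)⟩

end IsRenewalPair

namespace DirGraph

variable {G : DirGraph} {F : G.E → ℝ} {β : ℝ} {u v w : G.V}

lemma isPath_iff_isChain {μ : List G.E} :
    G.IsPath μ ↔ μ.IsChain fun e f => G.r e = G.s f :=
  Iff.rfl

lemma isPathFrom_nil : G.IsPathFrom [] u w ↔ u = w := by
  simp [IsPathFrom, isPath_iff_isChain]

lemma isPathFrom_cons {e : G.E} {μ : List G.E} :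
    G.IsPathFrom (e :: μ) u w ↔ G.s e = u ∧ G.IsPathFrom μ (G.r e) w := by
  cases μ with
  | nil => simp [IsPathFrom, isPath_iff_isChain]
  | cons f μ =>
    simp only [IsPathFrom, isPath_iff_isChain, List.isChain_cons_cons, List.head?_cons,
      Option.mem_some_iff, List.getLast?_cons_cons, reduceCtorEq, false_implies, and_true,
      forall_eq', eq_comm (a := G.r e)]
    tauto

/-- `μ` is a path from `u` to `v` all of whose edges start outside `v`, so that `v` is reached only
at the end. The empty path is allowed when `u = v`. -/
def IsFirstHit (v u : G.V) (μ : List G.E) : Prop :=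
  G.IsPathFrom μ u v ∧ ∀ e ∈ μ, G.s e ≠ v

lemma isFirstHit_nil : G.IsFirstHit v u [] ↔ u = v := by
  simp [IsFirstHit, isPathFrom_nil]

lemma isFirstHit_cons (huv : u ≠ v) {e : G.E} {μ : List G.E} :
    G.IsFirstHit v u (e :: μ) ↔ G.s e = u ∧ G.IsFirstHit v (G.r e) μ := by
  simp only [IsFirstHit, isPathFrom_cons, List.forall_mem_cons]
  aesop

lemma not_isFirstHit_self_cons {e : G.E} {μ : List G.E} : ¬ G.IsFirstHit v v (e :: μ) :=
  fun h => h.2 e List.mem_cons_self (isPathFrom_cons.1 h.1).1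

lemma isSimpleLoop_cons {e : G.E} {μ : List G.E} :
    G.IsSimpleLoop v (e :: μ) ↔ G.s e = v ∧ G.IsFirstHit v (G.r e) μ := by
  have hsource (h : G.IsPathFrom (e :: μ) v v) (i : ℕ) (hi : i < μ.length) :
      G.r ((e :: μ)[i]'(Nat.lt_succ_of_lt hi)) = G.s μ[i] :=
    List.isChain_iff_getElem.1 h.1 i (Nat.succ_lt_succ hi)
  rw [IsFirstHit, ← and_assoc, ← isPathFrom_cons, List.forall_mem_iff_getElem]
  simp only [IsSimpleLoop, ne_eq, reduceCtorEq, not_false_eq_true, true_and, List.length_cons,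
    Nat.add_lt_add_iff_right, List.get_eq_getElem]
  refine and_congr_right fun h => forall₂_congr fun i hi => ?_
  rw [hsource h i hi]

/-- `e^{-β F(μ)}`, the weight of the finite path `μ`. -/
noncomputable def pathWeight (F : G.E → ℝ) (β : ℝ) (μ : List G.E) : ℝ≥0∞ :=
  ENNReal.ofReal (Real.exp (-β * G.Fsum F μ))

lemma pathWeight_nil : G.pathWeight F β [] = 1 := by
  simp [pathWeight, Fsum]

lemma pathWeight_cons (e : G.E) (μ : List G.E) :
    G.pathWeight F β (e :: μ) = ENNReal.ofReal (Real.exp (-β * F e)) * G.pathWeight F β μ := by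
  rw [pathWeight, pathWeight, ← ENNReal.ofReal_mul (Real.exp_nonneg _), ← Real.exp_add, ← mul_add,
    Fsum, Fsum, List.map_cons, List.sum_cons]

lemma tsum_pathWeight_succ {P : List G.E → Prop} {Q : G.V → List G.E → Prop}
    (hP : ∀ e μ, P (e :: μ) ↔ G.s e = u ∧ Q (G.r e) μ) (n : ℕ) :
    ∑' μ : {μ : List G.E // μ.length = n + 1 ∧ P μ}, G.pathWeight F β μ =
      ∑' x, G.Amat F β u x *
        ∑' μ : {μ : List G.E // μ.length = n ∧ Q x μ}, G.pathWeight F β μ := by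
  let cons : (Σ x : G.V, {e : G.E // G.s e = u ∧ G.r e = x} ×
      {μ : List G.E // μ.length = n ∧ Q x μ}) ≃ {μ : List G.E // μ.length = n + 1 ∧ P μ} :=
    { toFun := fun ⟨_, e, μ⟩ => ⟨e.1 :: μ.1, by simp [μ.2.1],
        (hP _ _).2 ⟨e.2.1, e.2.2.symm ▸ μ.2.2⟩⟩
      invFun := fun
        | ⟨e :: μ, hμ⟩ => ⟨G.r e, ⟨e, ((hP e μ).1 hμ.2).1, rfl⟩,
            ⟨μ, Nat.succ_injective hμ.1, ((hP e μ).1 hμ.2).2⟩⟩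
      left_inv := by rintro ⟨x, ⟨e, he, rfl⟩, μ⟩; rfl
      right_inv := by rintro ⟨_ | ⟨e, μ⟩, hμ⟩ <;> [simp at hμ; rfl] }
  simp_rw [← cons.tsum_eq, ENNReal.tsum_sigma', ENNReal.tsum_prod', Amat,
    ← ENNReal.tsum_mul_right, ← ENNReal.tsum_mul_left]
  exact tsum_congr fun x => tsum_congr fun e => tsum_congr fun μ => pathWeight_cons e.1 μ.1

/-- The first-passage analogue of `Apow`: the weighted number of paths of length `n` from `u` that
hit `v` for the first time at the end. -/
noncomputable def firstHitSum (F : G.E → ℝ) (β : ℝ) (v : G.V) (n : ℕ) (u : G.V) : ℝ≥0∞ :=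
  ∑' μ : {μ : List G.E // μ.length = n ∧ G.IsFirstHit v u μ}, G.pathWeight F β μ

lemma firstHitSum_zero : G.firstHitSum F β v 0 u = if u = v then 1 else 0 := by
  refine (tsum_subtype {μ : List G.E | μ.length = 0 ∧ G.IsFirstHit v u μ}
    (G.pathWeight F β)).trans ?_
  rw [tsum_eq_single [] fun μ hμ => Set.indicator_of_notMem
      (fun h => hμ (List.length_eq_zero_iff.1 h.1)) _]
  simp [Set.indicator_apply, isFirstHit_nil, pathWeight_nil]

lemma firstHitSum_self_succ (n : ℕ) : G.firstHitSum F β v (n + 1) v = 0 := by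
  refine ENNReal.tsum_eq_zero.2 ?_
  rintro ⟨_ | ⟨e, μ⟩, hlen, hμ⟩
  · simp at hlen
  · exact absurd hμ not_isFirstHit_self_cons

lemma firstHitSum_succ (huv : u ≠ v) (n : ℕ) :
    G.firstHitSum F β v (n + 1) u = ∑' x, G.Amat F β u x * G.firstHitSum F β v n x :=
  tsum_pathWeight_succ (fun _ _ => isFirstHit_cons huv) n

lemma loopSum_succ (n : ℕ) :
    G.loopSum F β v (n + 1) = ∑' x, G.Amat F β v x * G.firstHitSum F β v n x :=
  tsum_pathWeight_succ (fun _ _ => isSimpleLoop_cons) n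

lemma Apow_eq_sum_firstHitSum (n : ℕ) (u : G.V) :
    G.Apow F β n u v =
      ∑ ij ∈ antidiagonal n, G.firstHitSum F β v ij.1 u * G.Apow F β ij.2 v v := by
  induction n generalizing u with
  | zero => simp [Apow, firstHitSum_zero]
  | succ n ih =>
    rw [Finset.Nat.sum_antidiagonal_succ, firstHitSum_zero]
    by_cases huv : u = v
    · subst huv
      simp [firstHitSum_self_succ]
    · rw [if_neg huv, zero_mul, zero_add, Apow]
      simp_rw [firstHitSum_succ huv, ih]
      exact tsum_mul_sum_mul ..

lemma isRenewalPair_loopSum_Apow (F : G.E → ℝ) (β : ℝ) (v : G.V) :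
    IsRenewalPair (G.loopSum F β v) (fun n => G.Apow F β n v v) where
  zero := if_pos rfl
  succ n := by
    rw [Apow]
    simp_rw [Apow_eq_sum_firstHitSum n, loopSum_succ]
    exact tsum_mul_sum_mul ..

lemma Apow_add (m n : ℕ) (u w : G.V) :
    G.Apow F β (m + n) u w = ∑' x, G.Apow F β m u x * G.Apow F β n x w := by
  induction m generalizing u with
  | zero => simp [Apow]
  | succ m ih =>
    simp_rw [Nat.succ_add, Apow, ih, ← ENNReal.tsum_mul_left, ← ENNReal.tsum_mul_right]
    rw [ENNReal.tsum_comm]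
    simp_rw [mul_assoc]

lemma Apow_mul_Apow_le (m n : ℕ) (u x w : G.V) :
    G.Apow F β m u x * G.Apow F β n x w ≤ G.Apow F β (m + n) u w := by
  rw [Apow_add]
  exact ENNReal.le_tsum (f := fun x => G.Apow F β m u x * G.Apow F β n x w) x

lemma Amat_pos (e : G.E) : 0 < G.Amat F β (G.s e) (G.r e) :=
  (ENNReal.ofReal_pos.2 (Real.exp_pos _)).trans_le <|
    ENNReal.le_tsum (f := fun f : {f : G.E // G.s f = G.s e ∧ G.r f = G.r e} =>
      ENNReal.ofReal (Real.exp (-β * F f.1))) ⟨e, rfl, rfl⟩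

lemma Apow_length_pos {μ : List G.E} (hμ : G.IsPathFrom μ u w) :
    0 < G.Apow F β μ.length u w := by
  induction μ generalizing u with
  | nil => simp [Apow, isPathFrom_nil.1 hμ]
  | cons e μ ih =>
    obtain ⟨rfl, htail⟩ := isPathFrom_cons.1 hμ
    exact (ENNReal.mul_pos (Amat_pos e).ne' (ih htail).ne').trans_le (ENNReal.le_tsum (G.r e))

lemma mul_tsum_Apow_le (m k : ℕ) (u v : G.V) :
    G.Apow F β m v u * G.Apow F β k u v * ∑' n, G.Apow F β n u u ≤ ∑' n, G.Apow F β n v v := by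
  rw [← ENNReal.tsum_mul_left]
  calc ∑' n, G.Apow F β m v u * G.Apow F β k u v * G.Apow F β n u u
      ≤ ∑' n, G.Apow F β (n + (m + k)) v v := by
        refine ENNReal.tsum_le_tsum fun n => ?_
        calc G.Apow F β m v u * G.Apow F β k u v * G.Apow F β n u u
            = G.Apow F β m v u * G.Apow F β n u u * G.Apow F β k u v := mul_right_comm _ _ _
          _ ≤ G.Apow F β (m + n) v u * G.Apow F β k u v := by
              gcongr
              exact Apow_mul_Apow_le ..
          _ ≤ G.Apow F β (m + n + k) v v := Apow_mul_Apow_le ..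
          _ = G.Apow F β (n + (m + k)) v v := by rw [add_comm m n, add_assoc]
    _ ≤ ∑' n, G.Apow F β n v v :=
        ENNReal.tsum_comp_le_tsum_of_injective (add_left_injective (m + k))
          fun n => G.Apow F β n v v

lemma StronglyConnected.recurrent_iff (hG : G.StronglyConnected) (v : G.V) :
    G.Recurrent F β ↔ ∑' n, G.Apow F β n v v = ⊤ := by
  refine ⟨?_, fun hv => ⟨v, hv⟩⟩
  rintro ⟨u, hu⟩
  obtain ⟨μ, hμ⟩ := hG v u
  obtain ⟨ν, hν⟩ := hG u v
  have hle := mul_tsum_Apow_le (F := F) (β := β) μ.length ν.length u v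
  rwa [hu, ENNReal.mul_top (mul_ne_zero (Apow_length_pos hμ).ne' (Apow_length_pos hν).ne'),
    top_le_iff] at hle

section Tilt

variable {F' : G.E → ℝ} {β' P : ℝ}

lemma Amat_eq_mul_inv_exp (hF' : ∀ e, β' * F' e = β * F e + P) (u w : G.V) :
    G.Amat F' β' u w = G.Amat F β u w * (ENNReal.ofReal (Real.exp P))⁻¹ := by
  rw [Amat, Amat, ← ENNReal.tsum_mul_right]
  refine tsum_congr fun e => ?_
  rw [← ENNReal.ofReal_inv_of_pos (Real.exp_pos P), ← ENNReal.ofReal_mul (Real.exp_nonneg _),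
    ← Real.exp_neg, ← Real.exp_add, neg_mul, hF', neg_add, neg_mul]

lemma Apow_eq_mul_inv_exp_pow (hF' : ∀ e, β' * F' e = β * F e + P) (n : ℕ) (u w : G.V) :
    G.Apow F' β' n u w = G.Apow F β n u w * (ENNReal.ofReal (Real.exp P))⁻¹ ^ n := by
  induction n generalizing u with
  | zero => simp [Apow]
  | succ n ih =>
    simp_rw [Apow, ih, Amat_eq_mul_inv_exp hF', ← ENNReal.tsum_mul_right, pow_succ]
    exact tsum_congr fun x => by ring

end Tilt

lemma Apow_self_ne_top (h : growthRate (fun n => G.Apow F β n v v) ≠ ⊤) (n : ℕ) :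
    G.Apow F β n v v ≠ ⊤ :=
  ne_top_of_growthRate_ne_top (a := fun n => G.Apow F β n v v) (by simp [Apow])
    (fun m n => Apow_mul_Apow_le m n v v v) h n

end DirGraph

theorem stmt_14_general (G : DirGraph) (hSC : G.StronglyConnected) {F F' : G.E → ℝ} {β β' P : ℝ}
    (hF' : ∀ e, β' * F' e = β * F e + P) (v : G.V)
    (hP : growthRate (fun n => G.Apow F β n v v) = ENNReal.ofReal (Real.exp P))
    (L : ℝ≥0∞) (hL : L = growthRate (G.loopSum F β v)) :
    (0 < L ∧ ∑' n : ℕ, G.loopSum F β v (n + 1) * L⁻¹ ^ (n + 1) = 1) ↔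
      (G.Recurrent F' β' ∧ L = ENNReal.ofReal (Real.exp P)) := by
  have hR0 : growthRate (fun n => G.Apow F β n v v) ≠ 0 :=
    hP ▸ (ENNReal.ofReal_pos.2 (Real.exp_pos P)).ne'
  have hR : growthRate (fun n => G.Apow F β n v v) ≠ ⊤ := hP ▸ ENNReal.ofReal_ne_top
  rw [hSC.recurrent_iff v, hL]
  simp_rw [DirGraph.Apow_eq_mul_inv_exp_pow hF', ← hP]
  exact (DirGraph.isRenewalPair_loopSum_Apow F β v).tsum_mul_inv_growthRate_pow_eq_one_iff
    (DirGraph.Apow_self_ne_top hR) hR0 hR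

/-- characterization of recurrence with `L = e^{h(G)}` in terms of
simple loops (the gauge case `F = 1`, so that `A(β)ⁿ_{vw} = Aⁿ_{vw} e^{-nβ}` and the
matrix `A(0)` with `F = 0` is the adjacency matrix). -/
theorem stmt_14 (G : DirGraph) (hSC : G.StronglyConnected) (h : ℝ)
    (hent : ∀ u : G.V,
      Filter.limsup (fun n : ℕ => (G.Apow (fun _ => 0) 0 n u u) ^ ((n : ℝ)⁻¹)) Filter.atTop
        = ENNReal.ofReal (Real.exp h))
    (v : G.V) (L : ℝ≥0∞)
    (hL : L = Filter.limsup
      (fun n : ℕ => (G.loopSum (fun _ => 0) 0 v n) ^ ((n : ℝ)⁻¹)) Filter.atTop) :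
    (0 < L ∧ ∑' n : ℕ, G.loopSum (fun _ => 0) 0 v (n + 1) * L⁻¹ ^ (n + 1) = 1) ↔
      (G.Recurrent (fun _ => 1) h ∧ L = ENNReal.ofReal (Real.exp h)) := by
  exact stmt_14_general G hSC (fun _ => by simp) v (hent v) L hL
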